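/- Let μ be a positive pluriharmonic measure on the unit sphere S_n (n ≥ 2), i.e., its Poisson integral is pluriharmonic on B_n. Then the singular part μ^s of μ (with respect to normalized surface measure Σ) is totally singular: μ^s ⊥ ρ for every probability measure ρ on S_n representing the origin for the ball algebra A(B_n). -/

import Mathlib

open Complex Metric MeasureTheory Set
open scoped ENNReal

section helpers

/-- Real Poisson–Szegő kernel at `rζ`, `ξ`. -/
noncomputable def pkR {n : ℕ} (r : ℝ) (ζ ξ : EuclideanSpace ℂ (Fin n)) : ℝ :=
  (1 - r ^ 2) ^ n / ‖1 - (r : ℂ) * inner ℂ ζ ξ‖ ^ (2 * n)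

/-- Extended nonnegative version. -/
noncomputable def pk {n : ℕ} (r : ℝ) (ζ ξ : EuclideanSpace ℂ (Fin n)) : ℝ≥0∞ :=
  ENNReal.ofReal (pkR r ζ ξ)

variable {n : ℕ}

lemma pkR_symm (r : ℝ) (ζ ξ : EuclideanSpace ℂ (Fin n)) : pkR r ζ ξ = pkR r ξ ζ := by
  unfold pkR
  congr 2
  rw [← RCLike.norm_conj (1 - (r : ℂ) * inner ℂ ζ ξ)]
  simp

lemma pk_symm (r : ℝ) (ζ ξ : EuclideanSpace ℂ (Fin n)) : pk r ζ ξ = pk r ξ ζ := by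
  unfold pk; rw [pkR_symm]

lemma pkR_nonneg {r : ℝ} (h0 : 0 ≤ r) (h1 : r < 1) (ζ ξ : EuclideanSpace ℂ (Fin n)) :
    0 ≤ pkR r ζ ξ := by
  have : 0 ≤ 1 - r ^ 2 := by nlinarith
  unfold pkR; positivity

lemma den_lower {r : ℝ} (h0 : 0 ≤ r) (h1 : r < 1) {ζ ξ : EuclideanSpace ℂ (Fin n)}
    (hζ : ‖ζ‖ = 1) (hξ : ‖ξ‖ = 1) : 1 - r ≤ ‖1 - (r : ℂ) * inner ℂ ζ ξ‖ := by
  have h := norm_sub_norm_le (1 : ℂ) ((r : ℂ) * inner ℂ ζ ξ)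
  have h2 : ‖(inner ℂ ζ ξ : ℂ)‖ ≤ 1 := by
    have := norm_inner_le_norm (𝕜 := ℂ) ζ ξ
    rw [hζ, hξ] at this; linarith
  rw [norm_mul, norm_one, Complex.norm_real, Real.norm_of_nonneg h0] at h
  nlinarith

lemma den_dist {r : ℝ} (h0 : 0 ≤ r) (h1 : r < 1) {ζ ξ : EuclideanSpace ℂ (Fin n)}
    (hζ : ‖ζ‖ = 1) (hξ : ‖ξ‖ = 1) : r * ‖ζ - ξ‖ ^ 2 ≤ 2 * ‖1 - (r : ℂ) * inner ℂ ζ ξ‖ := by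
  have h := @norm_sub_sq ℂ _ _ _ _ ζ ξ
  have h2 := Complex.re_le_norm (1 - (r : ℂ) * inner ℂ ζ ξ)
  rw [hζ, hξ] at h
  simp at h h2
  rw [h]; nlinarith

lemma den_tri {r : ℝ} (h0 : 0 ≤ r) (h1 : r < 1) {ζ ξ η : EuclideanSpace ℂ (Fin n)}
    (hζ : ‖ζ‖ = 1) (hξ : ‖ξ‖ = 1) (hη : ‖η‖ = 1) :
    ‖1 - (r : ℂ) * inner ℂ ζ η‖ ≤
      3 * (‖1 - (r : ℂ) * inner ℂ ζ ξ‖ + ‖1 - (r : ℂ) * inner ℂ ξ η‖) := by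
  have a1 := den_dist h0 h1 hζ hξ
  have a2 := den_dist h0 h1 hξ hη
  have a3 := den_lower h0 h1 hζ hξ
  have e : (1 - (r : ℂ) * inner ℂ ζ η) = (1 - (r : ℂ) * inner ℂ ζ ξ) +
      (1 - (r : ℂ) * inner ℂ ξ η) + (r : ℂ) * inner ℂ (ζ - ξ) (ξ - η) + ((r - 1 : ℝ) : ℂ) := by
    have : (inner ℂ ξ ξ : ℂ) = 1 := by
      rw [inner_self_eq_norm_sq_to_K, hξ]; simp
    simp only [inner_sub_left, inner_sub_right, this]
    push_cast; ring
  have b1 : ‖((r - 1 : ℝ) : ℂ)‖ = 1 - r := by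
    rw [Complex.norm_real, Real.norm_eq_abs, abs_of_neg (by linarith)]; ring
  have b2 : ‖(r : ℂ) * inner ℂ (ζ - ξ) (ξ - η)‖ ≤
      ‖1 - (r : ℂ) * inner ℂ ζ ξ‖ + ‖1 - (r : ℂ) * inner ℂ ξ η‖ := by
    rw [norm_mul, Complex.norm_real, Real.norm_of_nonneg h0]
    have := norm_inner_le_norm (𝕜 := ℂ) (ζ - ξ) (ξ - η)
    have h3 := mul_le_mul_of_nonneg_left this h0
    have h4 : r * (‖ζ - ξ‖ * ‖ξ - η‖) ≤ (r * ‖ζ - ξ‖ ^ 2 + r * ‖ξ - η‖ ^ 2) / 2 := by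
      nlinarith [mul_nonneg h0 (sq_nonneg (‖ζ - ξ‖ - ‖ξ - η‖))]
    linarith
  rw [e]
  have c1 := norm_add_le ((1 - (r : ℂ) * inner ℂ ζ ξ) +
      (1 - (r : ℂ) * inner ℂ ξ η) + (r : ℂ) * inner ℂ (ζ - ξ) (ξ - η)) ((r - 1 : ℝ) : ℂ)
  have c2 := norm_add_le ((1 - (r : ℂ) * inner ℂ ζ ξ) +
      (1 - (r : ℂ) * inner ℂ ξ η)) ((r : ℂ) * inner ℂ (ζ - ξ) (ξ - η))
  have c3 := norm_add_le (1 - (r : ℂ) * inner ℂ ζ ξ) (1 - (r : ℂ) * inner ℂ ξ η)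
  have c4 := norm_nonneg (1 - (r : ℂ) * inner ℂ ξ η)
  have c5 := norm_nonneg (1 - (r : ℂ) * inner ℂ ζ ξ)
  linarith

lemma pkR_mul_le {r : ℝ} (h0 : 0 ≤ r) (h1 : r < 1) {ζ ξ η : EuclideanSpace ℂ (Fin n)}
    (hζ : ‖ζ‖ = 1) (hξ : ‖ξ‖ = 1) (hη : ‖η‖ = 1) :
    pkR r ζ ξ * pkR r ξ η ≤ 36 ^ n * pkR r ζ η * (pkR r ζ ξ + pkR r ξ η) := by
  have a1 := den_lower h0 h1 hζ hξ
  have a2 := den_lower h0 h1 hξ hη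
  have a3 := den_lower h0 h1 hζ hη
  have t := den_tri h0 h1 hζ hξ hη
  unfold pkR
  generalize ‖1 - (r : ℂ) * inner ℂ ζ ξ‖ = a at *
  generalize ‖1 - (r : ℂ) * inner ℂ ξ η‖ = b at *
  generalize ‖1 - (r : ℂ) * inner ℂ ζ η‖ = d at *
  have ha : 0 < a := by linarith
  have hb : 0 < b := by linarith
  have hd : 0 < d := by linarith
  have hs : 0 ≤ 1 - r ^ 2 := by nlinarith
  have key : d ^ (2 * n) ≤ 36 ^ n * (a ^ (2 * n) + b ^ (2 * n)) := by
    have e36 : (36 : ℝ) ^ n = 6 ^ (2 * n) := by rw [pow_mul]; norm_num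
    rw [e36, mul_add, ← mul_pow, ← mul_pow]
    rcases le_total a b with h | h
    · have : d ^ (2 * n) ≤ (6 * b) ^ (2 * n) := pow_le_pow_left₀ hd.le (by linarith) _
      have : 0 ≤ (6 * a) ^ (2 * n) := by positivity
      linarith
    · have : d ^ (2 * n) ≤ (6 * a) ^ (2 * n) := pow_le_pow_left₀ hd.le (by linarith) _
      have : 0 ≤ (6 * b) ^ (2 * n) := by positivity
      linarith
  have hA : 0 < a ^ (2 * n) := by positivity
  have hB : 0 < b ^ (2 * n) := by positivity
  have hD : 0 < d ^ (2 * n) := by positivity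
  have hT : 0 ≤ (1 - r ^ 2) ^ n := by positivity
  generalize a ^ (2 * n) = A at *
  generalize b ^ (2 * n) = B at *
  generalize d ^ (2 * n) = D at *
  generalize (1 - r ^ 2) ^ n = T at *
  have e1 : T / A * (T / B) = (T * T) / (A * B * D) * D := by field_simp
  have e2 : 36 ^ n * (T / D) * (T / A + T / B) = (T * T) / (A * B * D) * (36 ^ n * (A + B)) := by
    field_simp; ring
  rw [e1, e2]
  exact mul_le_mul_of_nonneg_left key (by positivity)

lemma pk_mul_le {r : ℝ} (h0 : 0 ≤ r) (h1 : r < 1) {ζ ξ η : EuclideanSpace ℂ (Fin n)}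
    (hζ : ‖ζ‖ = 1) (hξ : ‖ξ‖ = 1) (hη : ‖η‖ = 1) :
    pk r ζ ξ * pk r ξ η ≤ 36 ^ n * pk r ζ η * (pk r ζ ξ + pk r ξ η) := by
  have h := ENNReal.ofReal_le_ofReal (pkR_mul_le h0 h1 hζ hξ hη)
  have q1 := pkR_nonneg h0 h1 ζ ξ
  have q2 := pkR_nonneg h0 h1 ξ η
  have q3 := pkR_nonneg h0 h1 ζ η
  rw [ENNReal.ofReal_mul q1, ENNReal.ofReal_mul (by positivity), ENNReal.ofReal_mul (by positivity),
    ENNReal.ofReal_add q1 q2, ENNReal.ofReal_pow (by norm_num)] at h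
  simpa [pk] using h

lemma exists_unitary {ζ η : EuclideanSpace ℂ (Fin n)} (hζ : ‖ζ‖ = 1) (hη : ‖η‖ = 1) :
    ∃ U : EuclideanSpace ℂ (Fin n) ≃ₗᵢ[ℂ] EuclideanSpace ℂ (Fin n), U ζ = η := by
  let L : (ℂ ∙ ζ) →ₗᵢ[ℂ] EuclideanSpace ℂ (Fin n) :=
    (ℂ ∙ η).subtypeₗᵢ.comp
      ((LinearIsometryEquiv.toSpanUnitSingleton η hη).toLinearIsometry.comp
        (LinearIsometryEquiv.toSpanUnitSingleton ζ hζ).symm.toLinearIsometry)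
  refine ⟨L.extend.toLinearIsometryEquiv rfl, ?_⟩
  have h1 : LinearIsometryEquiv.toSpanUnitSingleton (𝕜 := ℂ) ζ hζ 1 =
      ⟨ζ, Submodule.mem_span_singleton_self ζ⟩ := by
    ext; simp
  have h := L.extend_apply ⟨ζ, Submodule.mem_span_singleton_self ζ⟩
  have h2 : L ⟨ζ, Submodule.mem_span_singleton_self ζ⟩ = η := by
    simp only [L]
    rw [← h1]
    change ((LinearIsometryEquiv.toSpanUnitSingleton η hη
      ((LinearIsometryEquiv.toSpanUnitSingleton ζ hζ).symm
        (LinearIsometryEquiv.toSpanUnitSingleton ζ hζ 1)) : (ℂ ∙ η)) : EuclideanSpace ℂ (Fin n)) = η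
    rw [LinearIsometryEquiv.symm_apply_apply]
    simp
  rw [h2] at h
  simpa using h

variable [MeasurableSpace (EuclideanSpace ℂ (Fin n))] [BorelSpace (EuclideanSpace ℂ (Fin n))]

lemma measurable_pkR (r : ℝ) :
    Measurable (fun p : EuclideanSpace ℂ (Fin n) × EuclideanSpace ℂ (Fin n) => pkR r p.1 p.2) := by
  unfold pkR
  apply Measurable.div measurable_const
  apply Continuous.measurable
  fun_prop

lemma measurable_pk (r : ℝ) :
    Measurable (fun p : EuclideanSpace ℂ (Fin n) × EuclideanSpace ℂ (Fin n) => pk r p.1 p.2) :=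
  (measurable_pkR r).ennreal_ofReal

lemma measurable_pk_left (r : ℝ) (ζ : EuclideanSpace ℂ (Fin n)) : Measurable (pk r ζ) :=
  Measurable.of_uncurry_left (f := pk r) (measurable_pk r)

lemma pkR_le {r : ℝ} (h0 : 0 ≤ r) (h1 : r < 1) {ζ ξ : EuclideanSpace ℂ (Fin n)}
    (hζ : ‖ζ‖ = 1) (hξ : ‖ξ‖ = 1) : pkR r ζ ξ ≤ (1 - r ^ 2) ^ n / (1 - r) ^ (2 * n) := by
  have a1 := den_lower h0 h1 hζ hξ
  have : 0 ≤ 1 - r ^ 2 := by nlinarith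
  have : 0 < 1 - r := by linarith
  unfold pkR
  gcongr

lemma ae_norm_of_supp {μ : Measure (EuclideanSpace ℂ (Fin n))}
    (h : μ (sphere (0 : EuclideanSpace ℂ (Fin n)) 1)ᶜ = 0) : ∀ᵐ x ∂μ, ‖x‖ = 1 := by
  have := compl_mem_ae_iff.2 h
  rw [compl_compl] at this
  filter_upwards [this] with x hx
  simpa using hx

/-- Kernel integral against the pluriharmonic measure. -/
lemma lintegral_pk {μ : Measure (EuclideanSpace ℂ (Fin n))} [IsFiniteMeasure μ]
    (hμ : ∀ᵐ x ∂μ, ‖x‖ = 1) {F : EuclideanSpace ℂ (Fin n) → ℂ}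
    (hF : ∀ z ∈ ball (0 : EuclideanSpace ℂ (Fin n)) 1,
        ∫ ζ, (1 - ‖z‖ ^ 2) ^ n /
            ‖1 - ∑ i, z i * (starRingEnd ℂ) (ζ i)‖ ^ (2 * n) ∂μ = (F z).re)
    {r : ℝ} (h0 : 0 ≤ r) (h1 : r < 1) {ζ : EuclideanSpace ℂ (Fin n)} (hζ : ‖ζ‖ = 1) :
    0 ≤ (F ((r : ℂ) • ζ)).re ∧ ∫⁻ ξ, pk r ζ ξ ∂μ = ENNReal.ofReal (F ((r : ℂ) • ζ)).re := by
  have hn : ‖(r : ℂ) • ζ‖ = r := by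
    rw [norm_smul, hζ, Complex.norm_real, Real.norm_of_nonneg h0, mul_one]
  have h := hF ((r : ℂ) • ζ) (by rw [mem_ball_zero_iff, hn]; exact h1)
  have e : ∀ ξ : EuclideanSpace ℂ (Fin n), (1 - ‖(r : ℂ) • ζ‖ ^ 2) ^ n /
      ‖1 - ∑ i, ((r : ℂ) • ζ) i * (starRingEnd ℂ) (ξ i)‖ ^ (2 * n) = pkR r ζ ξ := by
    intro ξ
    rw [pkR_symm, hn]
    unfold pkR
    congr 4
    rw [PiLp.inner_apply, Finset.mul_sum]
    refine Finset.sum_congr rfl fun i _ => ?_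
    simp [mul_assoc]
  simp_rw [e] at h
  constructor
  · rw [← h]; exact integral_nonneg fun ξ => pkR_nonneg h0 h1 ζ ξ
  rw [← h, ofReal_integral_eq_lintegral_ofReal]
  · rfl
  · refine Integrable.of_bound (C := (1 - r ^ 2) ^ n / (1 - r) ^ (2 * n)) ?_ ?_
    · exact ((measurable_pkR r).comp (measurable_const.prodMk measurable_id)).aestronglyMeasurable
    · filter_upwards [hμ] with ξ hξ
      rw [Real.norm_of_nonneg (pkR_nonneg h0 h1 _ _)]
      exact pkR_le h0 h1 hζ hξ
  · exact Filter.Eventually.of_forall fun ξ => pkR_nonneg h0 h1 _ _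


lemma restrict_of_ae {μ : Measure (EuclideanSpace ℂ (Fin n))}
    (hμ : ∀ᵐ x ∂μ, ‖x‖ = 1) : μ.restrict (sphere 0 1) = μ := by
  apply Measure.restrict_eq_self_of_ae_mem
  filter_upwards [hμ] with x hx
  simpa using hx

lemma continuousOn_dil {F : EuclideanSpace ℂ (Fin n) → ℂ}
    (hF : DifferentiableOn ℂ F (ball 0 1)) {r : ℝ} (h0 : 0 ≤ r) (h1 : r < 1) :
    DifferentiableOn ℂ (fun ζ => F ((r : ℂ) • ζ)) (closedBall 0 1) := by
  refine hF.comp (by fun_prop) ?_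
  intro ζ hζ
  rw [mem_closedBall_zero_iff] at hζ
  rw [mem_ball_zero_iff, norm_smul, Complex.norm_real, Real.norm_of_nonneg h0]
  nlinarith

lemma integrable_dil {F : EuclideanSpace ℂ (Fin n) → ℂ}
    (hF : DifferentiableOn ℂ F (ball 0 1)) {r : ℝ} (h0 : 0 ≤ r) (h1 : r < 1)
    {τ : Measure (EuclideanSpace ℂ (Fin n))} [IsFiniteMeasure τ] (hτ : ∀ᵐ x ∂τ, ‖x‖ = 1) :
    Integrable (fun ζ => F ((r : ℂ) • ζ)) τ := by
  rw [← restrict_of_ae hτ]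
  exact ((continuousOn_dil hF h0 h1).continuousOn.mono sphere_subset_closedBall).integrableOn_compact
    (isCompact_sphere _ _)

lemma rep_of_inv {F : EuclideanSpace ℂ (Fin n) → ℂ}
    (hF : DifferentiableOn ℂ F (ball 0 1)) {r : ℝ} (h0 : 0 ≤ r) (h1 : r < 1)
    {σ : Measure (EuclideanSpace ℂ (Fin n))} [IsProbabilityMeasure σ] (hσ : ∀ᵐ x ∂σ, ‖x‖ = 1)
    (hinv : ∀ U : EuclideanSpace ℂ (Fin n) ≃ₗᵢ[ℂ] EuclideanSpace ℂ (Fin n),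
      Measure.map (⇑U) σ = σ) :
    ∫ ζ, F ((r : ℂ) • ζ) ∂σ = F 0 := by
  have hc : ∀ θ : ℝ, ‖circleMap 0 1 θ‖ = 1 := fun θ => by simp
  have hrot : ∀ θ : ℝ, ∫ ζ, F ((r : ℂ) • (circleMap 0 1 θ • ζ)) ∂σ = ∫ ζ, F ((r : ℂ) • ζ) ∂σ := by
    intro θ
    have hne : circleMap 0 1 θ ≠ 0 := by
      intro h; have := hc θ; rw [h] at this; simp at this
    let U : EuclideanSpace ℂ (Fin n) ≃ₗᵢ[ℂ] EuclideanSpace ℂ (Fin n) :=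
      { LinearEquiv.smulOfNeZero ℂ (EuclideanSpace ℂ (Fin n)) (circleMap 0 1 θ) hne with
        norm_map' := fun x => by
          change ‖circleMap 0 1 θ • x‖ = ‖x‖
          rw [norm_smul, hc, one_mul] }
    have h := hinv U
    conv_rhs => rw [← h]
    have := integral_map_equiv (μ := σ) U.toHomeomorph.toMeasurableEquiv
      (fun ζ => F ((r : ℂ) • ζ))
    exact this.symm
  have hmv : ∀ ζ : EuclideanSpace ℂ (Fin n), ‖ζ‖ = 1 →
      ∫ θ in (0 : ℝ)..2 * Real.pi, F ((r : ℂ) • (circleMap 0 1 θ • ζ)) = (2 * Real.pi) • F 0 := by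
    intro ζ hζ
    have hd : DiffContOnCl ℂ (fun w : ℂ => F ((r : ℂ) • (w • ζ))) (ball 0 |1|) := by
      apply DifferentiableOn.diffContOnCl
      rw [abs_one, closure_ball _ one_ne_zero]
      refine (continuousOn_dil hF h0 h1).comp (f := fun w : ℂ => w • ζ) (by fun_prop) ?_
      intro w hw
      simpa [norm_smul, hζ] using hw
    have := hd.circleAverage
    rw [Real.circleAverage_def, inv_smul_eq_iff₀ (by positivity)] at this
    simpa using this
  have hint : Integrable (Function.uncurry fun (θ : ℝ) (ζ : EuclideanSpace ℂ (Fin n)) =>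
      F ((r : ℂ) • (circleMap 0 1 θ • ζ))) ((volume.restrict (Ioc 0 (2 * Real.pi))).prod σ) := by
    rw [← restrict_of_ae hσ, Measure.prod_restrict]
    have hco : ContinuousOn (Function.uncurry fun (θ : ℝ) (ζ : EuclideanSpace ℂ (Fin n)) =>
      F ((r : ℂ) • (circleMap 0 1 θ • ζ))) (Icc 0 (2 * Real.pi) ×ˢ sphere 0 1) := by
      refine (continuousOn_dil hF h0 h1).continuousOn.comp
        (f := fun p : ℝ × EuclideanSpace ℂ (Fin n) => circleMap 0 1 p.1 • p.2) ?_ ?_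
      · apply Continuous.continuousOn
        exact ((continuous_circleMap 0 1).comp continuous_fst).smul continuous_snd
      · rintro ⟨θ, ζ⟩ ⟨_, h⟩
        simp only [mem_sphere_zero_iff_norm] at h
        rw [mem_closedBall_zero_iff, norm_smul, hc, h, one_mul]
    exact (hco.integrableOn_compact (isCompact_Icc.prod (isCompact_sphere _ _))).mono_set
      (prod_mono_left Ioc_subset_Icc_self)
  have hsw := integral_integral_swap hint
  simp_rw [hrot] at hsw
  have h2 : ∫ ζ, (∫ θ in Ioc 0 (2 * Real.pi), F ((r : ℂ) • (circleMap 0 1 θ • ζ))) ∂σ =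
      ∫ ζ, (2 * Real.pi) • F 0 ∂σ := by
    apply integral_congr_ae
    filter_upwards [hσ] with ζ hζ
    rw [← hmv ζ hζ, intervalIntegral.integral_of_le (by positivity)]
  rw [h2] at hsw
  have hpi : (0 : ℝ) ≤ 2 * Real.pi := by positivity
  simp [hpi] at hsw
  exact hsw

lemma lintegral_dil {F : EuclideanSpace ℂ (Fin n) → ℂ}
    (hF : DifferentiableOn ℂ F (ball 0 1)) {r : ℝ} (h0 : 0 ≤ r) (h1 : r < 1)
    {μ τ : Measure (EuclideanSpace ℂ (Fin n))} [IsFiniteMeasure μ] [IsProbabilityMeasure τ]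
    (hμ : ∀ᵐ x ∂μ, ‖x‖ = 1) (hτ : ∀ᵐ x ∂τ, ‖x‖ = 1)
    (hFμ : ∀ z ∈ ball (0 : EuclideanSpace ℂ (Fin n)) 1,
        ∫ ζ, (1 - ‖z‖ ^ 2) ^ n /
            ‖1 - ∑ i, z i * (starRingEnd ℂ) (ζ i)‖ ^ (2 * n) ∂μ = (F z).re)
    (hrep : ∫ ζ, F ((r : ℂ) • ζ) ∂τ = F 0) :
    ∫⁻ ζ, ∫⁻ ξ, pk r ζ ξ ∂μ ∂τ = μ univ := by
  have e0 : ENNReal.ofReal (F 0).re = μ univ := by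
    rw [← hFμ 0 (by simp)]
    simp
  have hi := integrable_dil hF h0 h1 hτ
  have e1 : ∫⁻ ζ, ∫⁻ ξ, pk r ζ ξ ∂μ ∂τ = ∫⁻ ζ, ENNReal.ofReal (F ((r : ℂ) • ζ)).re ∂τ := by
    apply lintegral_congr_ae
    filter_upwards [hτ] with ζ hζ
    exact (lintegral_pk hμ hFμ h0 h1 hζ).2
  rw [e1, ← e0, ← hrep, ← ofReal_integral_eq_lintegral_ofReal]
  · congr 1
    exact integral_re hi
  · exact hi.re
  · filter_upwards [hτ] with ζ hζ
    exact (lintegral_pk hμ hFμ h0 h1 hζ).1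

lemma lintegral_pk_sigma {F : EuclideanSpace ℂ (Fin n) → ℂ}
    (hF : DifferentiableOn ℂ F (ball 0 1)) {r : ℝ} (h0 : 0 ≤ r) (h1 : r < 1)
    {μ σ : Measure (EuclideanSpace ℂ (Fin n))} [IsFiniteMeasure μ] [IsProbabilityMeasure σ]
    (hμ : ∀ᵐ x ∂μ, ‖x‖ = 1) (hσ : ∀ᵐ x ∂σ, ‖x‖ = 1)
    (hFμ : ∀ z ∈ ball (0 : EuclideanSpace ℂ (Fin n)) 1,
        ∫ ζ, (1 - ‖z‖ ^ 2) ^ n /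
            ‖1 - ∑ i, z i * (starRingEnd ℂ) (ζ i)‖ ^ (2 * n) ∂μ = (F z).re)
    (hinv : ∀ U : EuclideanSpace ℂ (Fin n) ≃ₗᵢ[ℂ] EuclideanSpace ℂ (Fin n),
      Measure.map (⇑U) σ = σ) (hμ0 : μ univ ≠ 0)
    {ζ : EuclideanSpace ℂ (Fin n)} (hζ : ‖ζ‖ = 1) :
    ∫⁻ ξ, pk r ζ ξ ∂σ = 1 := by
  have hconst : ∀ η : EuclideanSpace ℂ (Fin n), ‖η‖ = 1 →
      ∫⁻ ξ, pk r η ξ ∂σ = ∫⁻ ξ, pk r ζ ξ ∂σ := by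
    intro η hη
    obtain ⟨U, hU⟩ := exists_unitary hζ hη
    conv_lhs => rw [← hinv U]
    rw [lintegral_map (measurable_pk_left r η) U.continuous.measurable]
    refine lintegral_congr fun ξ => ?_
    rw [← hU]
    unfold pk pkR
    rw [U.inner_map_map]
  have h := lintegral_dil hF h0 h1 hμ hσ hFμ (rep_of_inv hF h0 h1 hσ hinv)
  rw [lintegral_lintegral_swap (measurable_pk r).aemeasurable] at h
  have h2 : ∫⁻ ξ, ∫⁻ η, pk r η ξ ∂σ ∂μ = ∫⁻ _, (∫⁻ ξ, pk r ζ ξ ∂σ) ∂μ := by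
    apply lintegral_congr_ae
    filter_upwards [hμ] with ξ hξ
    rw [← hconst ξ hξ]
    exact lintegral_congr fun η => pk_symm r η ξ
  rw [h2, lintegral_const] at h
  exact (ENNReal.mul_eq_right hμ0 (measure_ne_top μ univ)).1 h


lemma core_abs {α : Type*} [MeasurableSpace α] {k : α → α → ℝ≥0∞} {S : α → Prop}
    (hmeas : Measurable (fun p : α × α => k p.1 p.2)) (ksymm : ∀ x y, k x y = k y x)
    (kmul : ∀ ζ ξ η, S ζ → S ξ → S η →
      k ζ ξ * k ξ η ≤ 36 ^ n * k ζ η * (k ζ ξ + k ξ η))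
    {ν σ : Measure α} [IsFiniteMeasure ν] [IsProbabilityMeasure σ]
    (hσ : ∀ᵐ x ∂σ, S x)
    (hone : ∀ ζ : α, S ζ → ∫⁻ ξ, k ζ ξ ∂σ = 1)
    {D V : Set α} (hD : MeasurableSet D)
    (hDS : ∀ ζ ∈ D, S ζ) {M : NNReal} (hM : M ≠ 0)
    (hDM : ∀ ζ ∈ D, ∫⁻ ξ, k ζ ξ ∂ν ≤ M)
    (hDV : ∀ ζ ∈ D, 2⁻¹ ≤ ∫⁻ ξ in V, k ζ ξ ∂σ) :
    ν D ≤ 32 * 36 ^ n * M * σ V := by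
  have hmeas' : Measurable (fun p : α × α =>
      k p.2 p.1) := hmeas.comp measurable_swap
  set g : α → ℝ≥0∞ := fun ξ => ∫⁻ ζ in D, k ζ ξ ∂ν with hg
  have gm : Measurable g := Measurable.lintegral_prod_right hmeas'
  have ml : ∀ ζ : α, Measurable (fun ξ => k ζ ξ) :=
    fun ζ => hmeas.comp measurable_prodMk_left
  have mr : ∀ ξ : α, Measurable (fun ζ => k ζ ξ) := fun ξ => by
    simp_rw [fun ζ => ksymm ζ ξ]; exact ml ξ
  -- lower bound
  have lower : 2⁻¹ * ν D ≤ ∫⁻ ξ in V, g ξ ∂σ := by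
    calc 2⁻¹ * ν D = ∫⁻ _ in D, 2⁻¹ ∂ν := by simp
      _ ≤ ∫⁻ ζ in D, ∫⁻ ξ in V, k ζ ξ ∂σ ∂ν :=
          setLIntegral_mono' hD hDV
      _ = ∫⁻ ξ in V, g ξ ∂σ := lintegral_lintegral_swap hmeas.aemeasurable
  -- quadratic bound
  have quad : ∫⁻ ξ, g ξ * g ξ ∂σ ≤ 2 * 36 ^ n * M * ν D := by
    have e1 : ∀ ξ, g ξ * g ξ = ∫⁻ ζ in D, ∫⁻ η in D, k ζ ξ * k η ξ ∂ν ∂ν := by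
      intro ξ
      simp_rw [fun ζ => lintegral_const_mul (μ := ν.restrict D) (k ζ ξ) (mr ξ)]
      rw [lintegral_mul_const _ (mr ξ)]
    have m3 : Measurable (fun p : (α × α) ×
        α => k p.1.2 p.1.1 * k p.2 p.1.1) := by
      apply Measurable.mul
      · exact hmeas'.comp measurable_fst
      · exact hmeas.comp (measurable_snd.prodMk (measurable_fst.comp measurable_fst))
    have m4 : ∀ ζ, Measurable (fun p : α × α =>
        k ζ p.1 * k p.2 p.1) := by
      intro ζ
      exact ((ml ζ).comp measurable_fst).mul hmeas'
    have e2 : ∫⁻ ξ, g ξ * g ξ ∂σ =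
        ∫⁻ ζ in D, ∫⁻ η in D, ∫⁻ ξ, k ζ ξ * k η ξ ∂σ ∂ν ∂ν := by
      simp_rw [e1]
      rw [lintegral_lintegral_swap]
      · refine lintegral_congr fun ζ => ?_
        rw [lintegral_lintegral_swap]
        exact (m4 ζ).aemeasurable
      · exact (Measurable.lintegral_prod_right m3).aemeasurable
    rw [e2]
    have e3 : ∀ ζ ∈ D, ∀ η ∈ D, ∫⁻ ξ, k ζ ξ * k η ξ ∂σ ≤ 36 ^ n * k ζ η * 2 := by
      intro ζ hζ η hη
      calc ∫⁻ ξ, k ζ ξ * k η ξ ∂σ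
          ≤ ∫⁻ ξ, 36 ^ n * k ζ η * (k ζ ξ + k η ξ) ∂σ := by
            apply lintegral_mono_ae
            filter_upwards [hσ] with ξ hξ
            rw [ksymm η ξ]
            exact kmul ζ ξ η (hDS ζ hζ) hξ (hDS η hη)
        _ = 36 ^ n * k ζ η * 2 := by
            rw [lintegral_const_mul _ (by exact (ml ζ).add (ml η)), lintegral_add_left (ml ζ),
              hone ζ (hDS ζ hζ), hone η (hDS η hη), one_add_one_eq_two]
    calc ∫⁻ ζ in D, ∫⁻ η in D, ∫⁻ ξ, k ζ ξ * k η ξ ∂σ ∂ν ∂ν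
        ≤ ∫⁻ _ in D, 2 * 36 ^ n * M ∂ν := by
          refine setLIntegral_mono' hD fun ζ hζ => ?_
          calc ∫⁻ η in D, ∫⁻ ξ, k ζ ξ * k η ξ ∂σ ∂ν
              ≤ ∫⁻ η in D, 2 * 36 ^ n * k ζ η ∂ν := by
                refine setLIntegral_mono' hD fun η hη => (e3 ζ hζ η hη).trans (le_of_eq ?_)
                ring
            _ = 2 * 36 ^ n * ∫⁻ η in D, k ζ η ∂ν := lintegral_const_mul _ (ml ζ)
            _ ≤ 2 * 36 ^ n * M := by
                gcongr
                exact (setLIntegral_le_lintegral _ _).trans (hDM ζ hζ)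
      _ = 2 * 36 ^ n * M * ν D := by simp
  -- combine
  set a : NNReal := 36 ^ n * M with ha
  have ha0 : a ≠ 0 := by positivity
  set t : NNReal := (8 * a)⁻¹ with ht
  have ht0 : t ≠ 0 := by positivity
  have pt : ∀ x : ℝ≥0∞, x ≤ t * (x * x) + ((8 * a : NNReal) : ℝ≥0∞) := by
    intro x
    rcases le_total x ((8 * a : NNReal) : ℝ≥0∞) with h | h
    · exact h.trans le_add_self
    · have : 1 ≤ (t : ℝ≥0∞) * x := by
        calc (1 : ℝ≥0∞) = t * ((8 * a : NNReal) : ℝ≥0∞) := by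
              rw [← ENNReal.coe_mul, ht, inv_mul_cancel₀ (by positivity)]; rfl
          _ ≤ _ := by gcongr
      calc x = 1 * x := (one_mul x).symm
        _ ≤ (t * x) * x := by gcongr
        _ = t * (x * x) := mul_assoc _ _ _
        _ ≤ _ := le_self_add
  have upper : ∫⁻ ξ in V, g ξ ∂σ ≤ t * (2 * a * ν D) + (8 * a : NNReal) * σ V := by
    calc ∫⁻ ξ in V, g ξ ∂σ ≤ ∫⁻ ξ in V, (t * (g ξ * g ξ) + ((8 * a : NNReal) : ℝ≥0∞)) ∂σ :=
          lintegral_mono fun ξ => pt _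
      _ = t * (∫⁻ ξ in V, g ξ * g ξ ∂σ) + (8 * a : NNReal) * σ V := by
          rw [lintegral_add_right _ measurable_const, lintegral_const_mul _ (by exact gm.mul gm)]
          simp
      _ ≤ _ := by
          gcongr
          refine (setLIntegral_le_lintegral _ _).trans (quad.trans (le_of_eq ?_))
          rw [ha]; push_cast; ring
  have fin := lower.trans upper
  have f1 : ν D ≠ ∞ := measure_ne_top _ _
  have f2 : σ V ≠ ∞ := measure_ne_top _ _
  have goal' : ν D ≤ 32 * a * σ V := by
    generalize ν D = x at *
    generalize σ V = s at *
    lift x to NNReal using f1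
    lift s to NNReal using f2
    have fin' : 2⁻¹ * x ≤ t * (2 * a * x) + 8 * a * s := by
      rw [← ENNReal.coe_le_coe]
      push_cast
      simpa using fin
    have e : t * (2 * a * x) = x / 4 := by
      have ha1 : (a : ℝ) ≠ 0 := by exact_mod_cast ha0
      apply NNReal.eq
      rw [ht]
      push_cast
      field_simp
      ring
    rw [e] at fin'
    have : x ≤ 32 * a * s := by
      rw [← NNReal.coe_le_coe] at fin' ⊢
      push_cast at fin' ⊢
      linarith
    exact_mod_cast this
  refine goal'.trans (le_of_eq ?_)
  rw [ha]; push_cast; ring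


lemma core_est {r : ℝ} (h0 : 0 ≤ r) (h1 : r < 1)
    {ν σ : Measure (EuclideanSpace ℂ (Fin n))} [IsFiniteMeasure ν] [IsProbabilityMeasure σ]
    (hσ : ∀ᵐ x ∂σ, ‖x‖ = 1)
    (hone : ∀ ζ : EuclideanSpace ℂ (Fin n), ‖ζ‖ = 1 → ∫⁻ ξ, pk r ζ ξ ∂σ = 1)
    {D V : Set (EuclideanSpace ℂ (Fin n))} (hD : MeasurableSet D)
    (hDS : ∀ ζ ∈ D, ‖ζ‖ = 1) {M : NNReal} (hM : M ≠ 0)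
    (hDM : ∀ ζ ∈ D, ∫⁻ ξ, pk r ζ ξ ∂ν ≤ M)
    (hDV : ∀ ζ ∈ D, 2⁻¹ ≤ ∫⁻ ξ in V, pk r ζ ξ ∂σ) :
    ν D ≤ 32 * 36 ^ n * M * σ V :=
  core_abs (k := pk r) (S := fun x => ‖x‖ = 1) (measurable_pk r) (pk_symm r)
    (fun _ _ _ a b c => pk_mul_le h0 h1 a b c) hσ hone hD hDS hM hDM hDV

lemma exists_r (hn : 2 ≤ n) {δ : ℝ} (hδ : 0 < δ) :
    ∃ r : ℝ, 1 / 2 ≤ r ∧ r < 1 ∧ (1 - r ^ 2) ^ n / (δ ^ 2 / 4) ^ (2 * n) ≤ 1 / 2 := by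
  have ht : Filter.Tendsto (fun r : ℝ => (1 - r ^ 2) ^ n / (δ ^ 2 / 4) ^ (2 * n))
      (nhdsWithin 1 (Iio 1)) (nhds 0) := by
    have : Continuous (fun r : ℝ => (1 - r ^ 2) ^ n / (δ ^ 2 / 4) ^ (2 * n)) := by fun_prop
    have h := this.tendsto 1
    have e : (1 - (1 : ℝ) ^ 2) ^ n / (δ ^ 2 / 4) ^ (2 * n) = 0 := by
      have : n ≠ 0 := by omega
      simp [this]
    rw [e] at h
    exact h.mono_left nhdsWithin_le_nhds
  have h1 : ∀ᶠ r : ℝ in nhdsWithin 1 (Iio 1), (1 - r ^ 2) ^ n / (δ ^ 2 / 4) ^ (2 * n) ≤ 1 / 2 :=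
    ht.eventually_le_const (by norm_num)
  have h2 : ∀ᶠ r : ℝ in nhdsWithin 1 (Iio 1), 1 / 2 ≤ r :=
    nhdsWithin_le_nhds (eventually_ge_nhds (by norm_num))
  have h3 : ∀ᶠ r : ℝ in nhdsWithin 1 (Iio 1), r < 1 := eventually_mem_nhdsWithin
  obtain ⟨r, ha, hb, hc⟩ := (h1.and (h2.and h3)).exists
  exact ⟨r, hb, hc, ha⟩

lemma pk_far {δ r : ℝ} (hδ : 0 < δ) (h0 : 1 / 2 ≤ r) (h1 : r < 1)
    (hr : (1 - r ^ 2) ^ n / (δ ^ 2 / 4) ^ (2 * n) ≤ 1 / 2)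
    {ζ ξ : EuclideanSpace ℂ (Fin n)} (hζ : ‖ζ‖ = 1) (hξ : ‖ξ‖ = 1) (hd : δ ≤ ‖ζ - ξ‖) :
    pk r ζ ξ ≤ 2⁻¹ := by
  have hr0 : 0 ≤ r := by linarith
  have h := den_dist hr0 h1 hζ hξ
  have h2 : δ ^ 2 / 4 ≤ ‖1 - (r : ℂ) * inner ℂ ζ ξ‖ := by
    have : δ ^ 2 ≤ ‖ζ - ξ‖ ^ 2 := pow_le_pow_left₀ hδ.le hd 2
    nlinarith
  have h3 : 0 ≤ 1 - r ^ 2 := by nlinarith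
  have : pkR r ζ ξ ≤ 1 / 2 := by
    refine le_trans ?_ hr
    unfold pkR
    gcongr
  unfold pk
  calc ENNReal.ofReal (pkR r ζ ξ) ≤ ENNReal.ofReal (1 / 2) := ENNReal.ofReal_le_ofReal this
    _ = 2⁻¹ := by
      rw [one_div, ENNReal.ofReal_inv_of_pos (by norm_num)]; simp

lemma half_mass {δ r : ℝ} (hδ : 0 < δ) (h0 : 1 / 2 ≤ r) (h1 : r < 1)
    (hr : (1 - r ^ 2) ^ n / (δ ^ 2 / 4) ^ (2 * n) ≤ 1 / 2)
    {σ : Measure (EuclideanSpace ℂ (Fin n))} [IsProbabilityMeasure σ]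
    (hσ : ∀ᵐ x ∂σ, ‖x‖ = 1)
    {ζ : EuclideanSpace ℂ (Fin n)} (hζ : ‖ζ‖ = 1) (hone : ∫⁻ ξ, pk r ζ ξ ∂σ = 1)
    {K : Set (EuclideanSpace ℂ (Fin n))} (hK : ζ ∈ K) :
    2⁻¹ ≤ ∫⁻ ξ in cthickening δ K, pk r ζ ξ ∂σ := by
  have hV : MeasurableSet (cthickening δ K) := isClosed_cthickening.measurableSet
  have hs := lintegral_add_compl (μ := σ) (pk r ζ) hV
  have hc : ∫⁻ ξ in (cthickening δ K)ᶜ, pk r ζ ξ ∂σ ≤ 2⁻¹ := by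
    calc ∫⁻ ξ in (cthickening δ K)ᶜ, pk r ζ ξ ∂σ ≤ ∫⁻ _ in (cthickening δ K)ᶜ, 2⁻¹ ∂σ := by
          apply lintegral_mono_ae
          filter_upwards [ae_restrict_mem hV.compl, ae_restrict_of_ae hσ] with ξ hξ hξ1
          refine pk_far hδ h0 h1 hr hζ hξ1 ?_
          by_contra hlt
          push Not at hlt
          apply hξ
          apply mem_cthickening_of_dist_le ξ ζ δ K hK
          rw [dist_comm, dist_eq_norm]; exact hlt.le
      _ = 2⁻¹ * σ (cthickening δ K)ᶜ := by simp
      _ ≤ 2⁻¹ * 1 := by gcongr; exact prob_le_one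
      _ = 2⁻¹ := mul_one _
  have e : (∫⁻ ξ in cthickening δ K, pk r ζ ξ ∂σ) +
      ∫⁻ ξ in (cthickening δ K)ᶜ, pk r ζ ξ ∂σ = 1 := hs.trans hone
  have h3 : (2⁻¹ : ℝ≥0∞) + 2⁻¹ ≤ (∫⁻ ξ in cthickening δ K, pk r ζ ξ ∂σ) + 2⁻¹ := by
    rw [ENNReal.inv_two_add_inv_two, ← e]
    gcongr
  exact (ENNReal.add_le_add_iff_right (by simp)).1 h3

end helpers

/-- The singular part of a positive pluriharmonic measure on the unit sphere of `ℂⁿ`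
(with respect to normalized surface measure, characterized as the unitarily invariant
probability measure on the sphere) is totally singular: it is mutually singular with every
probability measure representing the origin for the ball algebra. -/
theorem stmt11 (n : ℕ) (hn : 2 ≤ n)
    [MeasurableSpace (EuclideanSpace ℂ (Fin n))]
    [BorelSpace (EuclideanSpace ℂ (Fin n))]
    (Λ : Measure (EuclideanSpace ℂ (Fin n))) (hΛprob : IsProbabilityMeasure Λ)
    (hΛsupp : Λ (sphere (0 : EuclideanSpace ℂ (Fin n)) 1)ᶜ = 0)
    (hΛinv : ∀ U : EuclideanSpace ℂ (Fin n) ≃ₗᵢ[ℂ] EuclideanSpace ℂ (Fin n),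
      Measure.map (⇑U) Λ = Λ)
    (μ : Measure (EuclideanSpace ℂ (Fin n))) (hμfin : IsFiniteMeasure μ)
    (hμsupp : μ (sphere (0 : EuclideanSpace ℂ (Fin n)) 1)ᶜ = 0)
    -- `μ` is pluriharmonic: its Poisson integral is the real part of a holomorphic function
    (hplh : ∃ F : EuclideanSpace ℂ (Fin n) → ℂ,
      DifferentiableOn ℂ F (ball (0 : EuclideanSpace ℂ (Fin n)) 1) ∧
      ∀ z ∈ ball (0 : EuclideanSpace ℂ (Fin n)) 1,
        ∫ ζ, (1 - ‖z‖ ^ 2) ^ n /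
            ‖1 - ∑ i, z i * (starRingEnd ℂ) (ζ i)‖ ^ (2 * n) ∂μ = (F z).re) :
    ∀ ρ : Measure (EuclideanSpace ℂ (Fin n)), IsProbabilityMeasure ρ →
      ρ (sphere (0 : EuclideanSpace ℂ (Fin n)) 1)ᶜ = 0 →
      (∀ f : EuclideanSpace ℂ (Fin n) → ℂ,
        ContinuousOn f (closedBall (0 : EuclideanSpace ℂ (Fin n)) 1) →
        DifferentiableOn ℂ f (ball (0 : EuclideanSpace ℂ (Fin n)) 1) →
        ∫ ζ, f ζ ∂ρ = f 0) →
      μ.singularPart Λ ⟂ₘ ρ := by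
  intro ρ hρ hρsupp hρrep
  obtain ⟨F, hF, hFμ⟩ := hplh
  have hμ := ae_norm_of_supp hμsupp
  have hσ := ae_norm_of_supp hΛsupp
  have hρ1 := ae_norm_of_supp hρsupp
  by_cases hμ0 : μ univ = 0
  · have : μ = 0 := Measure.measure_univ_eq_zero.1 hμ0
    subst this
    simp
  apply Measure.mutuallySingular_of_disjoint
  intro τ hτν hτρ
  have hτμ : τ ≤ μ := hτν.trans (Measure.singularPart_le μ Λ)
  have : IsFiniteMeasure τ := isFiniteMeasure_of_le ρ hτρ
  obtain ⟨s, hs, hs1, hs2⟩ := Measure.mutuallySingular_singularPart μ Λ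
  have hτs : τ s = 0 := le_antisymm ((hτν s).trans hs1.le) bot_le
  have hτ : ∀ᵐ x ∂τ, ‖x‖ = 1 := (Measure.absolutelyContinuous_of_le hτμ).ae_le hμ
  have key : ∀ K ⊆ sᶜ, IsCompact K → τ K = 0 := by
    intro K hKs hK
    have hσK : Λ K = 0 := measure_mono_null hKs hs2
    have est : ∀ M : NNReal, M ≠ 0 → ∀ δ : ℝ, 0 < δ →
        τ K ≤ 32 * 36 ^ n * M * Λ (cthickening δ K) + μ univ / M := by
      intro M hM δ hδ
      obtain ⟨r, hr0, hr1, hr⟩ := exists_r hn hδ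
      have h0 : 0 ≤ r := by linarith
      have hone : ∀ ζ : EuclideanSpace ℂ (Fin n), ‖ζ‖ = 1 → ∫⁻ ξ, pk r ζ ξ ∂Λ = 1 :=
        fun ζ hζ => lintegral_pk_sigma hF h0 hr1 hμ hσ hFμ hΛinv hμ0 hζ
      have um : Measurable (fun ζ : EuclideanSpace ℂ (Fin n) => ∫⁻ ξ, pk r ζ ξ ∂μ) :=
        Measurable.lintegral_prod_right (measurable_pk r)
      set D : Set (EuclideanSpace ℂ (Fin n)) :=
        (K ∩ sphere 0 1) ∩ {ζ | ∫⁻ ξ, pk r ζ ξ ∂μ ≤ M} with hDdef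
      have hD : MeasurableSet D :=
        (hK.measurableSet.inter isClosed_sphere.measurableSet).inter
          (measurableSet_le um measurable_const)
      have hDS : ∀ ζ ∈ D, ‖ζ‖ = 1 := fun ζ hζ => by simpa using hζ.1.2
      have c := core_est (ν := τ) h0 hr1 hσ hone hD hDS hM
        (fun ζ hζ => (lintegral_mono' hτμ le_rfl).trans hζ.2)
        (fun ζ hζ => half_mass hδ hr0 hr1 hr hσ (hDS ζ hζ) (hone ζ (hDS ζ hζ)) hζ.1.1)
      have hrep : ∫ ζ, F ((r : ℂ) • ζ) ∂ρ = F 0 := by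
        have hd := continuousOn_dil hF h0 hr1
        have := hρrep (fun ζ => F ((r : ℂ) • ζ)) hd.continuousOn (hd.mono ball_subset_closedBall)
        simpa using this
      have hm := lintegral_dil hF h0 hr1 hμ hρ1 hFμ hrep
      have mk : τ {ζ | (M : ℝ≥0∞) ≤ ∫⁻ ξ, pk r ζ ξ ∂μ} ≤ μ univ / M := by
        refine (hτρ _).trans ?_
        rw [← hm]
        exact meas_ge_le_lintegral_div um.aemeasurable (by simpa using hM) ENNReal.coe_ne_top
      have hS : τ (sphere (0 : EuclideanSpace ℂ (Fin n)) 1)ᶜ = 0 :=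
        le_antisymm ((hτμ _).trans hμsupp.le) bot_le
      have sub : K ⊆ D ∪ ({ζ | (M : ℝ≥0∞) ≤ ∫⁻ ξ, pk r ζ ξ ∂μ} ∪
          (sphere (0 : EuclideanSpace ℂ (Fin n)) 1)ᶜ) := by
        intro ζ hζ
        by_cases hs : ζ ∈ sphere (0 : EuclideanSpace ℂ (Fin n)) 1
        · rcases le_total (∫⁻ ξ, pk r ζ ξ ∂μ) M with h | h
          · exact Or.inl ⟨⟨hζ, hs⟩, h⟩
          · exact Or.inr (Or.inl h)
        · exact Or.inr (Or.inr hs)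
      calc τ K ≤ τ D + (τ {ζ | (M : ℝ≥0∞) ≤ ∫⁻ ξ, pk r ζ ξ ∂μ} +
            τ (sphere (0 : EuclideanSpace ℂ (Fin n)) 1)ᶜ) :=
            (measure_mono sub).trans ((measure_union_le _ _).trans
              (add_le_add le_rfl (measure_union_le _ _)))
        _ ≤ _ := by
            rw [hS, add_zero]
            exact add_le_add c mk
    have est2 : ∀ M : NNReal, M ≠ 0 → τ K ≤ μ univ / M := by
      intro M hM
      have t1 : Filter.Tendsto (fun δ : ℝ => Λ (cthickening δ K)) (nhdsWithin 0 (Ioi 0))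
          (nhds 0) := by
        rw [← hσK]
        exact (tendsto_measure_cthickening_of_isCompact hK).mono_left nhdsWithin_le_nhds
      have hc : (32 * 36 ^ n * M : ℝ≥0∞) ≠ ∞ :=
        ENNReal.mul_ne_top (ENNReal.mul_ne_top (by simp) (ENNReal.pow_ne_top (by simp)))
          ENNReal.coe_ne_top
      have t2 := (ENNReal.Tendsto.const_mul t1 (Or.inr hc)).add_const (μ univ / M)
      rw [mul_zero, zero_add] at t2
      refine ge_of_tendsto t2 ?_
      filter_upwards [self_mem_nhdsWithin] with δ hδ
      exact est M hM δ hδ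
    have t3 : Filter.Tendsto (fun k : ℕ => μ univ / (k : ℝ≥0∞)) Filter.atTop (nhds 0) := by
      have := ENNReal.Tendsto.const_div (a := μ univ) ENNReal.tendsto_nat_nhds_top
        (Or.inr (measure_ne_top μ univ))
      simpa using this
    refine le_antisymm (ge_of_tendsto t3 ?_) bot_le
    filter_upwards [Filter.eventually_ge_atTop 1] with k hk
    have := est2 (k : NNReal) (by positivity)
    simpa using this
  have hcompl : τ sᶜ = 0 := by
    rw [hs.compl.measure_eq_iSup_isCompact_of_ne_top (measure_ne_top _ _)]
    simp only [ENNReal.iSup_eq_zero]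
    intro K hKs hK
    exact key K hKs hK
  have : τ = 0 := by
    rw [← Measure.measure_univ_eq_zero, ← union_compl_self s]
    exact measure_union_null hτs hcompl
  rw [this]
  exact bot_le
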